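/- Lorentz gauge condition for the Lienard–Wiechert potentials: Let τ > 0 and r > 0. Let f ∈ C¹([0,τ)×ℝ³×ℝ³) vanish for |ξ| > r and satisfy ∂_t ρ_f + div_x j_f = 0, where ρ_f = ∫ f dξ and j_f = ∫ v(ξ) f dξ. Let u ∈ C²([0,τ)×ℝ³×ℝ³) vanish for |ξ| > r and solve, for each fixed ξ, ∂_t²u − Δ_x u = f with u(0,x,ξ) = ∂_t u(0,x,ξ) = 0. Let E^in ∈ C²(ℝ³;ℝ³) satisfy div_x E^in = ρ_f(0,·), let A_I ∈ C²(ℝ³;ℝ³) satisfy div_x A_I = 0, and let A⁰ ∈ C²([0,τ)×ℝ³;ℝ³) solve ∂_t²A⁰ − Δ_x A⁰ = 0 with A⁰(0,·) = A_I and ∂_t A⁰(0,·) = −E^in. Define φ(t,x) = ∫_{ℝ³} u(t,x,ξ) dξ and A(t,x) = A⁰(t,x) + ∫_{ℝ³} v(ξ) u(t,x,ξ) dξ. Then the Lorentz gauge condition ∂_t φ + div_x A = 0 holds on [0,τ)×ℝ³. -/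

import Mathlib

open MeasureTheory Real Set Filter Metric RealInnerProductSpace
open scoped ENNReal NNReal Topology

noncomputable section

/-- Physical space `ℝ³` with its Euclidean structure. -/
abbrev E3 : Type := EuclideanSpace ℝ (Fin 3)

/-- The `i`-th standard basis vector of `ℝ³`. -/
def e3 (i : Fin 3) : E3 := EuclideanSpace.single i 1

/-- The relativistic velocity `v(ξ) = ξ/√(1+|ξ|²)`. -/
def vrel (ξ : E3) : E3 := (Real.sqrt (1 + ‖ξ‖ ^ 2))⁻¹ • ξ

/-- Partial derivative in the `i`-th coordinate direction. -/
def pd3 (u : E3 → ℝ) (i : Fin 3) (x : E3) : ℝ := fderiv ℝ u x (e3 i)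

/-- Divergence of a vector field on `ℝ³`. -/
def divg (F : E3 → E3) (x : E3) : ℝ := ∑ i : Fin 3, pd3 (fun y => F y i) i x

/-- Curl of a vector field on `ℝ³`. -/
def curl3 (F : E3 → E3) (x : E3) : E3 :=
  (WithLp.equiv 2 (Fin 3 → ℝ)).symm
    ![pd3 (fun y => F y 2) 1 x - pd3 (fun y => F y 1) 2 x,
      pd3 (fun y => F y 0) 2 x - pd3 (fun y => F y 2) 0 x,
      pd3 (fun y => F y 1) 0 x - pd3 (fun y => F y 0) 1 x]

/-- Time derivative on `[0,∞)` (one-sided at `t = 0`, the usual derivative at interior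
points). -/
def timeD {α : Type*} [NormedAddCommGroup α] [NormedSpace ℝ α] (G : ℝ → α) (t : ℝ) : α :=
  derivWithin G (Set.Ici 0) t

/-- Laplacian of a scalar function on `ℝ³`. -/
def lapx (w : E3 → ℝ) (x : E3) : ℝ :=
  ∑ i : Fin 3, fderiv ℝ (fun y => fderiv ℝ w y (e3 i)) x (e3 i)

/-- Laplacian of a vector field on `ℝ³`. -/
def lapxV (F : E3 → E3) (x : E3) : E3 :=
  ∑ i : Fin 3, fderiv ℝ (fun y => fderiv ℝ F y (e3 i)) x (e3 i)

/-- The scalar potential `φ(t,x) = ∫ u(t,x,ξ) dξ`. -/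
def phiP (u : ℝ → E3 → E3 → ℝ) (t : ℝ) (x : E3) : ℝ := ∫ ξ : E3, u t x ξ

/-- The vector potential `A(t,x) = A⁰(t,x) + ∫ v(ξ) u(t,x,ξ) dξ`. -/
def AP (A0 : ℝ → E3 → E3) (u : ℝ → E3 → E3 → ℝ) (t : ℝ) (x : E3) : E3 :=
  A0 t x + ∫ ξ : E3, u t x ξ • vrel ξ

/-- The electric field `E = -∂ₜA - ∇ₓφ`. -/
def EP (A0 : ℝ → E3 → E3) (u : ℝ → E3 → E3 → ℝ) (t : ℝ) (x : E3) : E3 :=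
  -timeD (fun s => AP A0 u s x) t - gradient (phiP u t) x

/-- The magnetic field `B = curlₓ A`. -/
def BP (A0 : ℝ → E3 → E3) (u : ℝ → E3 → E3 → ℝ) (t : ℝ) (x : E3) : E3 :=
  curl3 (AP A0 u t) x


set_option linter.unusedSectionVars false

section ParamInt

variable {P E : Type} [NormedAddCommGroup P] [NormedSpace ℝ P]
  [NormedAddCommGroup E] [NormedSpace ℝ E] [CompleteSpace E]

lemma slice_cont {S : Set P} {F : P → E3 → E} (hF : ContinuousOn (Function.uncurry F) (S ×ˢ univ))
    {p : P} (hp : p ∈ S) : Continuous (F p) := by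
  refine hF.comp_continuous (.prodMk_right _) fun y => ?_
  simpa only [prodMk_mem_set_prod_eq, mem_univ, and_true] using hp

lemma integrable_cpt {K : Set E3} (hK : IsCompact K) {g : E3 → E} (hg : Continuous g)
    (h0 : ∀ z, z ∉ K → g z = 0) : Integrable g :=
  hg.integrable_of_hasCompactSupport (HasCompactSupport.intro hK h0)

/-- Differentiation under the integral sign within a convex set. -/
lemma PI_hasFDerivWithinAt {S : Set P} (hS : Convex ℝ S) (hSu : UniqueDiffOn ℝ S)
    {K : Set E3} (hK : IsCompact K) {F : P → E3 → E} {F' : P → E3 → P →L[ℝ] E}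
    (hFc : ContinuousOn (Function.uncurry F) (S ×ˢ univ))
    (hF'c : ContinuousOn (Function.uncurry F') (S ×ˢ univ))
    (hF : ∀ p ∈ S, ∀ z, HasFDerivWithinAt (fun q => F q z) (F' p z) S p)
    (h0 : ∀ p ∈ S, ∀ z, z ∉ K → F p z = 0) :
    (∀ p ∈ S, ∀ z, z ∉ K → F' p z = 0) ∧
    (∀ p ∈ S, HasFDerivWithinAt (fun q => ∫ z, F q z) (∫ z, F' p z) S p) := by
  have h0' : ∀ p ∈ S, ∀ z, z ∉ K → F' p z = 0 := by
    intro p hp z hz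
    have h1 : HasFDerivWithinAt (fun q => F q z) (0 : P →L[ℝ] E) S p :=
      (hasFDerivWithinAt_const (0 : E) p S).congr (fun q hq => h0 q hq z hz) (h0 p hp z hz)
    exact (hSu p hp).eq (hF p hp z) h1
  refine ⟨h0', fun p hp => ?_⟩
  have hI : ∀ q ∈ S, Integrable (F q) := fun q hq =>
    integrable_cpt hK (slice_cont hFc hq) (h0 q hq)
  have hI' : Integrable (F' p) := integrable_cpt hK (slice_cont hF'c hp) (h0' p hp)
  rw [hasFDerivWithinAt_iff_isLittleO, Asymptotics.isLittleO_iff]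
  intro c hc
  set m : ℝ := volume.real K with hm
  have hm0 : 0 ≤ m := measureReal_nonneg
  set ε := c / (m + 1) with hε
  have hε0 : 0 < ε := by positivity
  obtain ⟨v, hv, hvb⟩ := hK.mem_uniformity_of_prod (f := F') (s := S)
    (hF'c.mono (prod_mono_right (subset_univ _))) hp (dist_mem_uniformity hε0)
  obtain ⟨δ, hδ, hδv⟩ := Metric.mem_nhdsWithin_iff.1 hv
  filter_upwards [inter_mem_nhdsWithin S (Metric.ball_mem_nhds p hδ)] with q hq
  have hbound : ∀ z, ‖F q z - F p z - F' p z (q - p)‖ ≤ K.indicator (fun _ => ε * ‖q - p‖) z := by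
    intro z
    by_cases hz : z ∈ K
    · rw [indicator_of_mem hz]
      refine Convex.norm_image_sub_le_of_norm_hasFDerivWithin_le' (s := ball p δ ∩ S)
        (f := fun q => F q z) (f' := fun q => F' q z)
        (fun x hx => (hF x hx.2 z).mono inter_subset_right) (fun x hx => ?_)
        ((convex_ball p δ).inter hS) ⟨mem_ball_self hδ, hp⟩ ⟨hq.2, hq.1⟩
      have := hvb x (hδv hx) z hz
      rw [← dist_eq_norm]
      exact le_of_lt this
    · rw [indicator_of_notMem hz, h0 q hq.1 z hz, h0 p hp z hz, h0' p hp z hz]; simp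
  have e1 : (∫ z, F q z) - (∫ z, F p z) - (∫ z, F' p z) (q - p)
      = ∫ z, (F q z - F p z - F' p z (q - p)) := by
    rw [ContinuousLinearMap.integral_apply hI', ← integral_sub (hI q hq.1) (hI p hp),
      ← integral_sub (f := fun z => F q z - F p z) ((hI q hq.1).sub (hI p hp))
        (hI'.apply_continuousLinearMap _)]
  rw [e1]
  calc ‖∫ z, (F q z - F p z - F' p z (q - p))‖
      ≤ ∫ z, K.indicator (fun _ => ε * ‖q - p‖) z := by
        refine norm_integral_le_of_norm_le ?_ (Eventually.of_forall hbound)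
        rw [integrable_indicator_iff hK.measurableSet]
        exact integrableOn_const hK.measure_ne_top
    _ = m * (ε * ‖q - p‖) := by
        rw [integral_indicator hK.measurableSet]; simp [hm]
    _ ≤ c * ‖q - p‖ := by
        rw [← mul_assoc]
        refine mul_le_mul_of_nonneg_right ?_ (norm_nonneg _)
        rw [hε, mul_div_assoc', div_le_iff₀ (by positivity)]
        nlinarith

lemma PI_cont {S : Set P} {K : Set E3} (hK : IsCompact K) {F : P → E3 → E}
    (hFc : ContinuousOn (Function.uncurry F) (S ×ˢ univ))
    (h0 : ∀ p ∈ S, ∀ z, z ∉ K → F p z = 0) : ContinuousOn (fun q => ∫ z, F q z) S :=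
  continuousOn_integral_of_compact_support hK hFc (fun p z hp hz => h0 p hp z hz)

end ParamInt

section DDsec

variable {P E : Type} [NormedAddCommGroup P] [NormedSpace ℝ P]
  [NormedAddCommGroup E] [NormedSpace ℝ E] [CompleteSpace E]

/-- Directional derivative within a set. -/
def DD (S : Set P) (v : P) (g : P → E) (p : P) : E := fderivWithin ℝ g S p v

lemma DD_C1 {S : Set P} (hSu : UniqueDiffOn ℝ S) {g : P → E} (hg : ContDiffOn ℝ 2 g S) (v : P) :
    ContDiffOn ℝ 1 (DD S v g) S := by
  have := hg.fderivWithin hSu (m := 1) (by norm_num)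
  exact this.clm_apply contDiffOn_const

lemma DD_C0 {S : Set P} (hSu : UniqueDiffOn ℝ S) {g : P → E} (hg : ContDiffOn ℝ 1 g S) (v : P) :
    ContinuousOn (DD S v g) S := by
  have := hg.continuousOn_fderivWithin hSu (by norm_num)
  exact this.clm_apply continuousOn_const

lemma DD_congr {S : Set P} {g h : P → E} (H : EqOn g h S) (v : P) {p : P} (hp : p ∈ S) :
    DD S v g p = DD S v h p := by
  unfold DD; rw [fderivWithin_congr H (H hp)]

lemma DD_slice {S : Set P} (hSu : UniqueDiffOn ℝ S) {U : P × E3 → E}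
    {p : P} (hp : p ∈ S) (z : E3) (hU : DifferentiableWithinAt ℝ U (S ×ˢ univ) (p, z)) :
    HasFDerivWithinAt (fun q => U (q, z))
      ((fderivWithin ℝ U (S ×ˢ univ) (p, z)).comp (ContinuousLinearMap.inl ℝ P E3)) S p := by
  have h1 : HasFDerivWithinAt (fun q : P => (q, z)) (ContinuousLinearMap.inl ℝ P E3) S p :=
    (hasFDerivAt_prodMk_left p z).hasFDerivWithinAt
  exact HasFDerivWithinAt.comp p (t := S ×ˢ univ) hU.hasFDerivWithinAt h1
    (fun q hq => ⟨hq, mem_univ _⟩)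

lemma DD_slice_eq {S : Set P} (hSu : UniqueDiffOn ℝ S) {U : P × E3 → E}
    {p : P} (hp : p ∈ S) (z : E3) (hU : DifferentiableWithinAt ℝ U (S ×ˢ univ) (p, z)) (v : P) :
    DD (S ×ˢ univ) (v, (0 : E3)) U (p, z) = DD S v (fun q => U (q, z)) p := by
  unfold DD
  rw [(DD_slice hSu hp z hU).fderivWithin (hSu p hp)]; simp

/-- The marginal of a function. -/
def II (U : P × E3 → E) (p : P) : E := ∫ z, U (p, z)

lemma PI1 {S : Set P} (hS : Convex ℝ S) (hSu : UniqueDiffOn ℝ S)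
    {K : Set E3} (hK : IsCompact K) {U : P × E3 → E} (hU : ContDiffOn ℝ 1 U (S ×ˢ univ))
    (h0 : ∀ p ∈ S, ∀ z, z ∉ K → U (p, z) = 0) :
    (∀ p ∈ S, ∀ z, z ∉ K → fderivWithin ℝ U (S ×ˢ univ) (p, z) ∘L ContinuousLinearMap.inl ℝ P E3 = 0) ∧
    ContDiffOn ℝ 1 (II U) S ∧
    (∀ p ∈ S, HasFDerivWithinAt (II U)
      (∫ z, fderivWithin ℝ U (S ×ˢ univ) (p, z) ∘L ContinuousLinearMap.inl ℝ P E3) S p) ∧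
    (∀ v, ∀ p ∈ S, DD S v (II U) p = II (DD (S ×ˢ univ) (v, (0 : E3)) U) p) ∧
    (∀ v, ∀ p ∈ S, ∀ z, z ∉ K → DD (S ×ˢ univ) (v, (0 : E3)) U (p, z) = 0) := by
  have hTu : UniqueDiffOn ℝ (S ×ˢ (univ : Set E3)) := hSu.prod uniqueDiffOn_univ
  let F' : P → E3 → P →L[ℝ] E := fun p z =>
    fderivWithin ℝ U (S ×ˢ univ) (p, z) ∘L ContinuousLinearMap.inl ℝ P E3
  have hFc : ContinuousOn (Function.uncurry fun p z => U (p, z)) (S ×ˢ univ) := hU.continuousOn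
  have hF'c : ContinuousOn (Function.uncurry F') (S ×ˢ univ) :=
    (hU.continuousOn_fderivWithin hTu (by norm_num)).clm_comp continuousOn_const
  have hd : ∀ p ∈ S, ∀ z, DifferentiableWithinAt ℝ U (S ×ˢ univ) (p, z) := fun p hp z =>
    hU.differentiableOn (by norm_num) _ ⟨hp, mem_univ _⟩
  obtain ⟨a, b⟩ := PI_hasFDerivWithinAt hS hSu hK hFc hF'c
    (fun p hp z => DD_slice hSu hp z (hd p hp z)) h0
  have hI' : ∀ p ∈ S, Integrable (F' p) := fun p hp =>
    integrable_cpt hK (slice_cont hF'c hp) (a p hp)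
  refine ⟨a, ?_, b, ?_, ?_⟩
  · have : (1 : WithTop ℕ∞) = 0 + 1 := by norm_num
    rw [this, contDiffOn_succ_iff_hasFDerivWithinAt_of_uniqueDiffOn hSu]
    refine ⟨by simp, _, ?_, b⟩
    rw [contDiffOn_zero]
    exact PI_cont hK hF'c a
  · intro v p hp
    have b' : HasFDerivWithinAt (II U) (∫ z, F' p z) S p := b p hp
    unfold DD
    rw [b'.fderivWithin (hSu p hp), ContinuousLinearMap.integral_apply (hI' p hp)]
    simp [II, F']
  · intro v p hp z hz
    have := congrArg (fun L : P →L[ℝ] E => L v) (a p hp z hz)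
    simpa [DD, F'] using this

lemma PI2 {S : Set P} (hS : Convex ℝ S) (hSu : UniqueDiffOn ℝ S)
    {K : Set E3} (hK : IsCompact K) {U : P × E3 → E} (hU : ContDiffOn ℝ 2 U (S ×ˢ univ))
    (h0 : ∀ p ∈ S, ∀ z, z ∉ K → U (p, z) = 0) : ContDiffOn ℝ 2 (II U) S := by
  have hTu : UniqueDiffOn ℝ (S ×ˢ (univ : Set E3)) := hSu.prod uniqueDiffOn_univ
  obtain ⟨a, b, c, -⟩ := PI1 hS hSu hK (hU.of_le (by norm_num)) h0
  have : (2 : WithTop ℕ∞) = 1 + 1 := by norm_num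
  rw [this, contDiffOn_succ_iff_hasFDerivWithinAt_of_uniqueDiffOn hSu]
  refine ⟨by simp, _, ?_, c⟩
  exact (PI1 (U := fun q : P × E3 => fderivWithin ℝ U (S ×ˢ univ) q ∘L ContinuousLinearMap.inl ℝ P E3)
    hS hSu hK ((hU.fderivWithin hTu (m := 1) (by norm_num)).clm_comp contDiffOn_const) a).2.1

end DDsec

/-- The space-time slab. -/
def St (τ : ℝ) : Set (ℝ × E3) := Set.Ico 0 τ ×ˢ (Set.univ : Set E3)

lemma St_convex (τ : ℝ) : Convex ℝ (St τ) := (convex_Ico 0 τ).prod convex_univ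

lemma St_uniq (τ : ℝ) : UniqueDiffOn ℝ (St τ) := (uniqueDiffOn_Ico 0 τ).prod uniqueDiffOn_univ

/-- Convolution in space. -/
def CC (k : E3 → ℝ) (g : ℝ × E3 → ℝ) (p : ℝ × E3) : ℝ := ∫ z, k z * g (p.1, p.2 - z)

lemma CC_shift_mem {τ : ℝ} {p : ℝ × E3} (hp : p ∈ St τ) (z : E3) : (p.1, p.2 - z) ∈ St τ :=
  ⟨hp.1, mem_univ _⟩

lemma CC_slice_cont {τ : ℝ} {g : ℝ × E3 → ℝ} (hg : ContinuousOn g (St τ)) {p : ℝ × E3}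
    (hp : p ∈ St τ) : Continuous fun z => g (p.1, p.2 - z) :=
  hg.comp_continuous (by fun_prop) fun z => CC_shift_mem hp z

lemma CC_integrable {τ : ℝ} {k : E3 → ℝ} (hk : Continuous k) (hks : HasCompactSupport k)
    {g : ℝ × E3 → ℝ} (hg : ContinuousOn g (St τ)) {p : ℝ × E3}
    (hp : p ∈ St τ) : Integrable fun z => k z * g (p.1, p.2 - z) :=
  (hk.mul (CC_slice_cont hg hp)).integrable_of_hasCompactSupport hks.mul_right

lemma CC_cont {τ : ℝ} {k : E3 → ℝ} (hk : Continuous k) (hks : HasCompactSupport k)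
    {g : ℝ × E3 → ℝ} (hg : ContinuousOn g (St τ)) : ContinuousOn (CC k g) (St τ) := by
  refine PI_cont (F := fun (p : ℝ × E3) z => k z * g (p.1, p.2 - z)) hks ?_ ?_
  · refine (hk.comp continuous_snd).continuousOn.mul (hg.comp (by fun_prop) ?_)
    rintro ⟨p, z⟩ h; exact CC_shift_mem h.1 z
  · intro p hp z hz
    simp [image_eq_zero_of_notMem_tsupport hz]

lemma CC_C1 {τ : ℝ} {k : E3 → ℝ} (hk : ContDiff ℝ 1 k) (hks : HasCompactSupport k)
    {g : ℝ × E3 → ℝ} (hg : ContDiffOn ℝ 1 g (St τ)) :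
    ContDiffOn ℝ 1 (CC k g) (St τ) ∧
    ∀ v, ∀ p ∈ St τ, DD (St τ) v (CC k g) p = CC k (DD (St τ) v g) p := by
  have hmap : ∀ q ∈ St τ ×ˢ (univ : Set E3), (q.1.1, q.1.2 - q.2) ∈ St τ := by
    rintro ⟨p, z⟩ h; exact CC_shift_mem h.1 z
  have hU : ContDiffOn ℝ 1 (fun q : (ℝ × E3) × E3 => k q.2 * g (q.1.1, q.1.2 - q.2))
      (St τ ×ˢ univ) := by
    refine (hk.comp contDiff_snd).contDiffOn.mul (hg.comp (ContDiff.contDiffOn ?_) hmap)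
    fun_prop
  have h0 : ∀ p ∈ St τ, ∀ z, z ∉ tsupport k → k z * g (p.1, p.2 - z) = 0 := by
    intro p hp z hz
    simp [image_eq_zero_of_notMem_tsupport hz]
  obtain ⟨-, a, -, b, -⟩ := PI1 (St_convex τ) (St_uniq τ) hks hU h0
  refine ⟨a, fun v p hp => ?_⟩
  refine (b v p hp).trans ?_
  unfold II CC
  congr 1
  ext z
  rw [DD_slice_eq (St_uniq τ) hp z (hU.differentiableOn (by norm_num) _ ⟨hp, mem_univ _⟩)]
  unfold DD
  have h1 : HasFDerivWithinAt (fun q : ℝ × E3 => (q.1, q.2 - z)) (ContinuousLinearMap.id ℝ (ℝ × E3))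
      (St τ) p := by
    have := (hasFDerivAt_id (𝕜 := ℝ) p).hasFDerivWithinAt (s := St τ) |>.sub_const ((0 : ℝ), z)
    refine this.congr (fun q _ => ?_) ?_ <;> ext <;> simp
  have h2 := HasFDerivWithinAt.comp p (t := St τ) (g := g)
    ((hg.differentiableOn (by norm_num) _ (CC_shift_mem hp z)).hasFDerivWithinAt) h1
    (fun q hq => CC_shift_mem hq z)
  have h3 := (h2.const_mul (k z)).fderivWithin (St_uniq τ p hp)
  simp only [Function.comp_def] at h3
  rw [h3]
  simp

lemma DD_space {E : Type} [NormedAddCommGroup E] [NormedSpace ℝ E]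
    {τ : ℝ} {g : ℝ × E3 → E} {t : ℝ} {x : E3} (ht : t ∈ Ico 0 τ)
    (hg : DifferentiableWithinAt ℝ g (St τ) (t, x)) :
    HasFDerivAt (fun y => g (t, y))
      (fderivWithin ℝ g (St τ) (t, x) ∘L ContinuousLinearMap.inr ℝ ℝ E3) x := by
  rw [← hasFDerivWithinAt_univ]
  exact HasFDerivWithinAt.comp x (t := St τ) hg.hasFDerivWithinAt
    (hasFDerivAt_prodMk_right t x).hasFDerivWithinAt (fun y _ => ⟨ht, mem_univ _⟩)

lemma DD_space_eq {E : Type} [NormedAddCommGroup E] [NormedSpace ℝ E]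
    {τ : ℝ} {g : ℝ × E3 → E} {t : ℝ} {x : E3} (ht : t ∈ Ico 0 τ)
    (hg : DifferentiableWithinAt ℝ g (St τ) (t, x)) (e : E3) :
    fderiv ℝ (fun y => g (t, y)) x e = DD (St τ) (0, e) g (t, x) := by
  rw [(DD_space ht hg).fderiv]; simp [DD]

lemma DD_time {E : Type} [NormedAddCommGroup E] [NormedSpace ℝ E]
    {τ : ℝ} {g : ℝ × E3 → E} {t : ℝ} {x : E3} (ht : t ∈ Ico 0 τ)
    (hg : DifferentiableWithinAt ℝ g (St τ) (t, x)) :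
    HasDerivWithinAt (fun s => g (s, x)) (DD (St τ) (1, 0) g (t, x)) (Ici 0) t := by
  have h1 : HasFDerivWithinAt (fun s => g (s, x))
      (fderivWithin ℝ g (St τ) (t, x) ∘L ContinuousLinearMap.inl ℝ ℝ E3) (Ico 0 τ) t :=
    HasFDerivWithinAt.comp t (t := St τ) hg.hasFDerivWithinAt
      (hasFDerivAt_prodMk_left t x).hasFDerivWithinAt (fun y hy => ⟨hy, mem_univ _⟩)
  have h2 := h1.hasDerivWithinAt
  have h3 : HasDerivWithinAt (fun s => g (s, x)) (DD (St τ) (1, 0) g (t, x)) (Ico 0 τ) t := by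
    simpa [DD] using h2
  refine h3.mono_of_mem_nhdsWithin ?_
  rw [mem_nhdsWithin]
  exact ⟨Iio τ, isOpen_Iio, ht.2, fun s hs => ⟨hs.2, hs.1⟩⟩

lemma DD_time' {E : Type} [NormedAddCommGroup E] [NormedSpace ℝ E]
    {τ : ℝ} {g : ℝ × E3 → E} {t : ℝ} {x : E3} (ht : t ∈ Ioo 0 τ)
    (hg : DifferentiableWithinAt ℝ g (St τ) (t, x)) :
    HasDerivAt (fun s => g (s, x)) (DD (St τ) (1, 0) g (t, x)) t :=
  (DD_time ⟨ht.1.le, ht.2⟩ hg).hasDerivAt (Ici_mem_nhds ht.1)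

lemma CC_parts {τ : ℝ} {k : E3 → ℝ} (hk : ContDiff ℝ 1 k) (hks : HasCompactSupport k)
    {g : ℝ × E3 → ℝ} (hg : ContDiffOn ℝ 1 g (St τ)) (i : Fin 3) {p : ℝ × E3} (hp : p ∈ St τ) :
    CC k (DD (St τ) (0, e3 i) g) p = CC (pd3 k i) g p := by
  have hd : ∀ z : E3, HasFDerivAt (fun z => g (p.1, p.2 - z))
      ((fderivWithin ℝ g (St τ) (p.1, p.2 - z) ∘L ContinuousLinearMap.inr ℝ ℝ E3) ∘L
        (-ContinuousLinearMap.id ℝ E3)) z := by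
    intro z
    have h1 := DD_space (t := p.1) (x := p.2 - z) hp.1
      (hg.differentiableOn (by norm_num) _ (CC_shift_mem hp z))
    have h2 : HasFDerivAt (fun z : E3 => p.2 - z) (-ContinuousLinearMap.id ℝ E3) z := by
      simpa using (hasFDerivAt_id (𝕜 := ℝ) z).const_sub p.2
    exact HasFDerivAt.comp (g := fun y => g (p.1, y)) z h1 h2
  have he : ∀ z, fderiv ℝ (fun z => g (p.1, p.2 - z)) z (e3 i)
      = - DD (St τ) (0, e3 i) g (p.1, p.2 - z) := by
    intro z
    rw [(hd z).fderiv]; simp only [DD]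
    simp only [ContinuousLinearMap.comp_apply, neg_apply,
      ContinuousLinearMap.id_apply, map_neg, ContinuousLinearMap.inr_apply]
  have hpk : Continuous (pd3 k i) := (hk.continuous_fderiv (by norm_num)).clm_apply continuous_const
  have hpks : HasCompactSupport (pd3 k i) := hks.fderiv_apply (𝕜 := ℝ) (e3 i)
  have hDc := DD_C0 (St_uniq τ) hg (0, e3 i)
  have key := integral_mul_fderiv_eq_neg_fderiv_mul_of_integrable (μ := (volume : Measure E3))
    (f := k) (g := fun z => g (p.1, p.2 - z)) (v := e3 i)
    (CC_integrable hpk hpks hg.continuousOn hp) (by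
      simp_rw [he, mul_neg]
      exact (CC_integrable hk.continuous hks hDc hp).neg)
    (CC_integrable hk.continuous hks hg.continuousOn hp)
    (fun x _ => hk.differentiable (by norm_num) x) (fun x _ => (hd x).differentiableAt)
  simp_rw [he, mul_neg, integral_neg] at key
  exact neg_injective key


/-- The square of the positive part. -/
def qpos (s : ℝ) : ℝ := (max s 0) ^ 2

lemma qpos_hasDerivAt (s : ℝ) : HasDerivAt qpos (2 * max s 0) s := by
  rcases lt_trichotomy s 0 with h | h | h
  · rw [max_eq_right h.le]
    have : HasDerivAt (fun _ : ℝ => (0 : ℝ)) (2 * 0) s := by simpa using hasDerivAt_const s (0 : ℝ)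
    refine this.congr_of_eventuallyEq ?_
    filter_upwards [Iio_mem_nhds h] with y hy
    simp [qpos, max_eq_right (le_of_lt (mem_Iio.1 hy))]
  · subst h
    rw [hasDerivAt_iff_isLittleO_nhds_zero]
    simp only [qpos, max_self, zero_add, mul_zero, smul_zero, sub_zero]
    have h2 : (fun h : ℝ => h ^ 2) =o[𝓝 0] fun h : ℝ => h := by
      simpa using Asymptotics.isLittleO_pow_id (𝕜 := ℝ) (n := 2) (by norm_num)
    refine Asymptotics.IsBigO.trans_isLittleO (Asymptotics.IsBigO.of_bound 1 ?_) h2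
    filter_upwards with y
    simp only [norm_pow, one_mul, ne_eq, OfNat.ofNat_ne_zero, not_false_eq_true, zero_pow, sub_zero]
    gcongr
    rw [Real.norm_eq_abs, Real.norm_eq_abs, abs_of_nonneg (le_max_right _ _)]
    exact max_le (le_abs_self _) (abs_nonneg _)
  · rw [max_eq_left h.le]
    have : HasDerivAt (fun y : ℝ => y ^ 2) (2 * s) s := by simpa using hasDerivAt_pow 2 s
    refine this.congr_of_eventuallyEq ?_
    filter_upwards [Ioi_mem_nhds h] with y hy
    simp [qpos, max_eq_left (le_of_lt (mem_Ioi.1 hy))]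

lemma qpos_contDiff : ContDiff ℝ 1 qpos := by
  rw [contDiff_one_iff_deriv]
  refine ⟨fun s => (qpos_hasDerivAt s).differentiableAt, ?_⟩
  have : deriv qpos = fun s => 2 * max s 0 := funext fun s => (qpos_hasDerivAt s).deriv
  rw [this]; fun_prop

/-- The light-cone weight. -/
def eta (R : ℝ) (x0 : E3) (p : ℝ × E3) : ℝ := qpos ((R - p.1) ^ 2 - ‖p.2 - x0‖ ^ 2)

lemma eta_contDiff (R : ℝ) (x0 : E3) : ContDiff ℝ 1 (eta R x0) := by
  refine qpos_contDiff.comp ?_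
  have : ContDiff ℝ 1 fun p : ℝ × E3 => ‖p.2 - x0‖ ^ 2 := (contDiff_snd.sub contDiff_const).norm_sq ℝ
  exact ((contDiff_const.sub contDiff_fst).pow 2).sub this

lemma eta_hasDeriv_time (R : ℝ) (x0 x : E3) (t : ℝ) :
    HasDerivAt (fun s => eta R x0 (s, x))
      (-(4 * max ((R - t) ^ 2 - ‖x - x0‖ ^ 2) 0 * (R - t))) t := by
  have h1 : HasDerivAt (fun s : ℝ => (R - s) ^ 2 - ‖x - x0‖ ^ 2) (-(2 * (R - t))) t := by
    have := (((hasDerivAt_id t).const_sub R).pow 2).sub_const (‖x - x0‖ ^ 2)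
    convert! this using 1
    simp
  have h2 := (qpos_hasDerivAt ((R - t) ^ 2 - ‖x - x0‖ ^ 2)).comp t h1
  convert! h2 using 1
  ring

lemma eta_space (R : ℝ) (x0 x : E3) (t : ℝ) (i : Fin 3) :
    fderiv ℝ (fun y => eta R x0 (t, y)) x (e3 i) =
      -(4 * max ((R - t) ^ 2 - ‖x - x0‖ ^ 2) 0 * (x - x0) i) := by
  have h1 : HasFDerivAt (fun y : E3 => (R - t) ^ 2 - ‖y - x0‖ ^ 2)
      (-(2 • (innerSL ℝ (x - x0)))) x := by
    have := ((hasFDerivAt_id (𝕜 := ℝ) x).sub_const x0).norm_sq.const_sub ((R - t) ^ 2)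
    simpa using this
  have h2 := (qpos_hasDerivAt ((R - t) ^ 2 - ‖x - x0‖ ^ 2)).comp_hasFDerivAt x h1
  have h3 : HasFDerivAt (fun y => eta R x0 (t, y)) _ x := h2
  rw [h3.fderiv]
  simp [e3, EuclideanSpace.inner_single_right]
  ring


lemma cs_aux (c m v d0 d1 d2 w0 w1 w2 : ℝ) (hc : 0 < c) (hm : 0 ≤ m)
    (hd : 0 < m → d0 ^ 2 + d1 ^ 2 + d2 ^ 2 ≤ c ^ 2) :
    -(4 * m * c) * (v ^ 2 + (w0 ^ 2 + w1 ^ 2 + w2 ^ 2))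
      + 8 * m * (v * (d0 * w0 + d1 * w1 + d2 * w2)) ≤ 0 := by
  rcases hm.eq_or_lt with h | h
  · rw [← h]; simp
  · have hd := hd h
    set s := d0 * w0 + d1 * w1 + d2 * w2 with hs
    set w := w0 ^ 2 + w1 ^ 2 + w2 ^ 2 with hw
    have hw0 : 0 ≤ w := by positivity
    have h1 : s ^ 2 ≤ (d0 ^ 2 + d1 ^ 2 + d2 ^ 2) * w := by
      rw [hs, hw]
      nlinarith [sq_nonneg (d0 * w1 - d1 * w0), sq_nonneg (d0 * w2 - d2 * w0),
        sq_nonneg (d1 * w2 - d2 * w1)]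
    have h2 : s ^ 2 ≤ c ^ 2 * w := h1.trans (mul_le_mul_of_nonneg_right hd hw0)
    have h3 : 0 ≤ c * (c * (v ^ 2 + w) - 2 * (v * s)) := by
      nlinarith [sq_nonneg (c * v - s)]
    have h4 : 0 ≤ c * (v ^ 2 + w) - 2 * (v * s) := nonneg_of_mul_nonneg_right h3 hc
    nlinarith [mul_nonneg h.le h4]

lemma ibp_aux {η g : E3 → ℝ} (hη : ContDiff ℝ 1 η) (hs : HasCompactSupport η) (hg : ContDiff ℝ 1 g)
    (e : E3) : Integrable (fun z => fderiv ℝ η z e * g z + η z * fderiv ℝ g z e) ∧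
      ∫ z, (fderiv ℝ η z e * g z + η z * fderiv ℝ g z e) = 0 := by
  have c1 : Continuous fun z => fderiv ℝ η z e :=
    (hη.continuous_fderiv (by norm_num)).clm_apply continuous_const
  have c2 : Continuous fun z => fderiv ℝ g z e :=
    (hg.continuous_fderiv (by norm_num)).clm_apply continuous_const
  have i1 : Integrable (fun z => fderiv ℝ η z e * g z) :=
    (c1.mul hg.continuous).integrable_of_hasCompactSupport (hs.fderiv_apply (𝕜 := ℝ) e).mul_right
  have i2 : Integrable (fun z => η z * fderiv ℝ g z e) :=
    (hη.continuous.mul c2).integrable_of_hasCompactSupport hs.mul_right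
  have i3 : Integrable (fun z => η z * g z) :=
    (hη.continuous.mul hg.continuous).integrable_of_hasCompactSupport hs.mul_right
  refine ⟨i1.add i2, ?_⟩
  rw [integral_add i1 i2, integral_mul_fderiv_eq_neg_fderiv_mul_of_integrable i1 i2 i3
    (fun x _ => hη.differentiable (by norm_num) x) (fun x _ => hg.differentiable (by norm_num) x)]
  ring

lemma slice_C1 {τ : ℝ} {g : ℝ × E3 → ℝ} (hg : ContDiffOn ℝ 1 g (St τ)) {t : ℝ} (ht : t ∈ Ico 0 τ) :
    ContDiff ℝ 1 fun y => g (t, y) := by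
  rw [← contDiffOn_univ]
  exact hg.comp (contDiff_prodMk_right t).contDiffOn (fun y _ => ⟨ht, mem_univ _⟩)

lemma energy {τ : ℝ} {V : ℝ × E3 → ℝ} {W : Fin 3 → ℝ × E3 → ℝ}
    (hV : ContDiffOn ℝ 1 V (St τ)) (hW : ∀ i, ContDiffOn ℝ 1 (W i) (St τ))
    (eq1 : ∀ p ∈ St τ, 0 < p.1 → DD (St τ) (1, 0) V p = ∑ i, DD (St τ) (0, e3 i) (W i) p)
    (eq2 : ∀ i, ∀ p ∈ St τ, 0 < p.1 → DD (St τ) (1, 0) (W i) p = DD (St τ) (0, e3 i) V p)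
    (V0 : ∀ x, V (0, x) = 0) (W0 : ∀ i x, W i (0, x) = 0) : ∀ p ∈ St τ, V p = 0 := by
  rintro ⟨t1, x1⟩ hp
  have ht1 : t1 ∈ Ico 0 τ := hp.1
  have hτ : 0 < τ := ht1.1.trans_lt ht1.2
  set R := t1 + 1 with hR
  set K := closedBall x1 (R + τ) with hKdef
  have hK : IsCompact K := isCompact_closedBall _ _
  have heta0 : ∀ s ∈ Ico 0 τ, ∀ z, z ∉ K → eta R x1 (s, z) = 0 := by
    intro s hs z hz
    have h1 : R + τ < ‖z - x1‖ := by
      simpa [hKdef, dist_eq_norm] using hz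
    have h2 : (R - s) ^ 2 - ‖z - x1‖ ^ 2 ≤ 0 := by
      have : (R - s) ^ 2 ≤ (R + τ) ^ 2 := by
        apply sq_le_sq'
        · linarith [hs.1, hs.2, ht1.1]
        · linarith [hs.1, hs.2, ht1.1]
      have : (R + τ) ^ 2 ≤ ‖z - x1‖ ^ 2 := by
        apply pow_le_pow_left₀ _ h1.le
        linarith [ht1.1]
      linarith
    simp [eta, qpos, max_eq_right h2]
  let e : ℝ × E3 → ℝ := fun q => V q ^ 2 + ∑ i, W i q ^ 2
  let U : ℝ × E3 → ℝ := fun q => eta R x1 q * e q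
  have he : ContDiffOn ℝ 1 e (St τ) := (hV.pow 2).add (ContDiffOn.sum fun i _ => (hW i).pow 2)
  have hU : ContDiffOn ℝ 1 U (St τ) := (eta_contDiff R x1).contDiffOn.mul he
  have hU0 : ∀ s ∈ Ico 0 τ, ∀ z, z ∉ K → U (s, z) = 0 := by
    intro s hs z hz
    simp [U, heta0 s hs z hz]
  obtain ⟨-, a, -, b, c⟩ := PI1 (convex_Ico 0 τ) (uniqueDiffOn_Ico 0 τ) hK hU hU0
  have hUd := fun q hq => hU.differentiableOn (by norm_num) q hq
  have hVd := fun q hq => hV.differentiableOn (by norm_num) q hq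
  have hWd := fun i q hq => (hW i).differentiableOn (by norm_num) q hq
  -- the derivative of the energy
  have hder : ∀ s ∈ Ioo 0 t1, deriv (II U) s ≤ 0 := by
    intro s hs
    have hsτ : s ∈ Ioo 0 τ := ⟨hs.1, hs.2.trans ht1.2⟩
    have hs' : s ∈ Ico 0 τ := ⟨hs.1.le, hsτ.2⟩
    have h1 : deriv (II U) s = ∫ z, DD (St τ) (1, 0) U (s, z) := by
      have := b 1 s hs'
      rw [← derivWithin_of_mem_nhds (Ico_mem_nhds hs.1 hsτ.2)]
      exact this
    rw [h1]
    let ηs : E3 → ℝ := fun y => eta R x1 (s, y)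
    have hη : ContDiff ℝ 1 ηs := (eta_contDiff R x1).comp (contDiff_prodMk_right s)
    have hηs : HasCompactSupport ηs := HasCompactSupport.intro hK (heta0 s hs')
    let g : Fin 3 → E3 → ℝ := fun i y => V (s, y) * W i (s, y)
    have hg : ∀ i, ContDiff ℝ 1 (g i) := fun i => (slice_C1 hV hs').mul (slice_C1 (hW i) hs')
    have hB := fun i => ibp_aux hη hηs (hg i) (e3 i)
    let B : Fin 3 → E3 → ℝ := fun i z =>
      fderiv ℝ ηs z (e3 i) * g i z + ηs z * fderiv ℝ (g i) z (e3 i)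
    have hDUi : Integrable fun z => DD (St τ) (1, 0) U (s, z) := by
      refine integrable_cpt hK ?_ (c 1 s hs')
      exact (DD_C0 (St_uniq τ) hU (1, 0)).comp_continuous (by fun_prop) fun z => ⟨hs', mem_univ _⟩
    have hBi : Integrable fun z => 2 * ∑ i, B i z :=
      (integrable_finsetSum _ fun i _ => (hB i).1).const_mul 2
    have hB0 : ∫ z, 2 * ∑ i, B i z = 0 := by
      rw [integral_const_mul, integral_finsetSum _ fun i _ => (hB i).1]
      simp [(hB _).2]
    have h2 : ∫ z, DD (St τ) (1, 0) U (s, z)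
        = ∫ z, (DD (St τ) (1, 0) U (s, z) - 2 * ∑ i, B i z) := by
      rw [integral_sub hDUi hBi, hB0, sub_zero]
    rw [h2]
    refine integral_nonpos fun z => ?_
    have hq : (s, z) ∈ St τ := ⟨hs', mem_univ _⟩
    have dV := DD_time' hsτ (hVd _ hq)
    have dW := fun i => DD_time' hsτ (hWd i _ hq)
    have dU := DD_time' hsτ (hUd _ hq)
    have dU' : HasDerivAt (fun s => U (s, z)) _ s :=
      (eta_hasDeriv_time R x1 z s).mul ((dV.pow 2).add (HasDerivAt.fun_sum (u := Finset.univ)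
        fun i _ => (dW i).pow 2))
    have e1 := dU.unique dU'
    have e2 : ∀ i, fderiv ℝ (g i) z (e3 i) = V (s, z) * DD (St τ) (0, e3 i) (W i) (s, z)
        + W i (s, z) * DD (St τ) (0, e3 i) V (s, z) := by
      intro i
      rw [← DD_space_eq hs' (hVd _ hq), ← DD_space_eq hs' (hWd i _ hq)]
      have : HasFDerivAt (g i) _ z := (DD_space hs' (hVd _ hq)).differentiableAt.hasFDerivAt.mul
        (DD_space hs' (hWd i _ hq)).differentiableAt.hasFDerivAt
      rw [this.fderiv]
      simp
    have e3' := fun i => eta_space R x1 z s i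
    have hcs := cs_aux (R - s) (max ((R - s) ^ 2 - ‖z - x1‖ ^ 2) 0) (V (s, z))
      ((z - x1) 0) ((z - x1) 1) ((z - x1) 2) (W 0 (s, z)) (W 1 (s, z)) (W 2 (s, z))
      (by linarith [hs.2]) (le_max_right _ _) (by
        intro h
        have h' : 0 < (R - s) ^ 2 - ‖z - x1‖ ^ 2 := by
          by_contra hn
          rw [max_eq_right (not_lt.1 hn)] at h
          exact lt_irrefl _ h
        rw [EuclideanSpace.real_norm_sq_eq, Fin.sum_univ_three] at h'
        linarith)
    simp only [Pi.zero_apply]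
    refine le_trans (le_of_eq ?_) hcs
    rw [e1]
    simp only [B, e2, ηs, e3', eq1 _ hq hs.1, eq2 _ _ hq hs.1, g, e, Fin.sum_univ_three]
    simp
    ring
  have hanti : AntitoneOn (II U) (Icc 0 t1) := by
    have hsub : Icc 0 t1 ⊆ Ico 0 τ := fun s hs => ⟨hs.1, hs.2.trans_lt ht1.2⟩
    refine antitoneOn_of_deriv_nonpos (convex_Icc 0 t1) (a.continuousOn.mono hsub) ?_ ?_
    · intro s hs
      exact ((a.differentiableOn (by norm_num)).mono hsub s (interior_subset hs)).mono interior_subset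
    · rw [interior_Icc]; exact hder
  have hE0 : II U 0 = 0 := by
    simp [II, U, e, V0, W0]
  have hE1 : II U t1 ≤ 0 := by
    rw [← hE0]; exact hanti ⟨le_rfl, ht1.1⟩ ⟨ht1.1, le_rfl⟩ ht1.1
  by_contra hne
  have hpos : 0 < ∫ z, U (t1, z) := by
    refine Continuous.integral_pos_of_hasCompactSupport_nonneg_nonzero (x := x1)
      (slice_C1 hU ht1).continuous (HasCompactSupport.intro hK (hU0 t1 ht1)) ?_ ?_
    · intro z
      simp only [U, e, eta, qpos, Pi.zero_apply]
      positivity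
    · have : eta R x1 (t1, x1) = 1 := by simp [eta, qpos, hR]
      simp only [U, e, this]
      have : 0 < V (t1, x1) ^ 2 := by positivity
      have : 0 ≤ ∑ i, W i (t1, x1) ^ 2 := by positivity
      have : 0 < 1 * (V (t1, x1) ^ 2 + ∑ i, W i (t1, x1) ^ 2) := by linarith
      exact this.ne'
  exact absurd hE1 (not_le.2 hpos)


lemma pd3_smooth {k : E3 → ℝ} (hk : ContDiff ℝ (⊤ : ℕ∞) k) (i : Fin 3) :
    ContDiff ℝ (⊤ : ℕ∞) (pd3 k i) :=
  (hk.fderiv_right (m := (⊤ : ℕ∞)) (by simp)).clm_apply contDiff_const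

lemma pd3_supp {k : E3 → ℝ} (hk : HasCompactSupport k) (i : Fin 3) : HasCompactSupport (pd3 k i) :=
  hk.fderiv_apply (𝕜 := ℝ) (e3 i)

lemma pd3_comm {k : E3 → ℝ} (hk : ContDiff ℝ (⊤ : ℕ∞) k) (i j : Fin 3) :
    pd3 (pd3 k i) j = pd3 (pd3 k j) i := by
  funext x
  have hs : IsSymmSndFDerivAt ℝ k x := (hk.contDiffAt).isSymmSndFDerivAt (by
    rw [minSmoothness_of_isRCLikeNormedField]
    exact WithTop.coe_le_coe.2 (le_top : (2 : ℕ∞) ≤ ⊤))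
  have hd : DifferentiableAt ℝ (fderiv ℝ k) x :=
    (hk.fderiv_right (m := 1) (by norm_cast)).differentiable (by norm_num) x
  have key : ∀ i j, pd3 (pd3 k i) j x = fderiv ℝ (fderiv ℝ k) x (e3 j) (e3 i) := by
    intro i j
    have : HasFDerivAt (pd3 k i) ((fderiv ℝ (fderiv ℝ k) x).flip (e3 i)) x := by
      have h := hd.hasFDerivAt.clm_apply (hasFDerivAt_const (e3 i) x)
      simp only [ContinuousLinearMap.comp_zero, zero_add] at h
      exact h
    unfold pd3 at this ⊢
    rw [this.fderiv]; simp
  rw [key, key, hs.eq]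

section alg

variable {P : Type} [NormedAddCommGroup P] [NormedSpace ℝ P] {E : Type}
  [NormedAddCommGroup E] [NormedSpace ℝ E]

lemma DD_add {S : Set P} (hSu : UniqueDiffOn ℝ S) {g h : P → E} (hg : ContDiffOn ℝ 1 g S)
    (hh : ContDiffOn ℝ 1 h S) (v : P) {p : P} (hp : p ∈ S) :
    DD S v (fun q => g q + h q) p = DD S v g p + DD S v h p := by
  unfold DD
  rw [fderivWithin_fun_add (hSu p hp) (hg.differentiableOn (by norm_num) p hp)
    (hh.differentiableOn (by norm_num) p hp)]
  rfl

lemma DD_sum {S : Set P} (hSu : UniqueDiffOn ℝ S) {g : Fin 3 → P → E}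
    (hg : ∀ i, ContDiffOn ℝ 1 (g i) S) (v : P) {p : P} (hp : p ∈ S) :
    DD S v (fun q => ∑ i, g i q) p = ∑ i, DD S v (g i) p := by
  unfold DD
  rw [fderivWithin_fun_sum (hSu p hp) (fun i _ => (hg i).differentiableOn (by norm_num) p hp)]
  simp

end alg

lemma CC_congr {k : E3 → ℝ} {g h : ℝ × E3 → ℝ} {p : ℝ × E3} (H : ∀ y, g (p.1, y) = h (p.1, y)) :
    CC k g p = CC k h p := by
  simp [CC, H]

lemma CC_zero {k : E3 → ℝ} {g : ℝ × E3 → ℝ} {p : ℝ × E3} (H : ∀ y, g (p.1, y) = 0) :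
    CC k g p = 0 := by
  simp [CC, H]

lemma CC_add {τ : ℝ} {k : E3 → ℝ} (hk : Continuous k) (hks : HasCompactSupport k)
    {g h : ℝ × E3 → ℝ} (hg : ContinuousOn g (St τ)) (hh : ContinuousOn h (St τ)) {p : ℝ × E3}
    (hp : p ∈ St τ) : CC k (fun q => g q + h q) p = CC k g p + CC k h p := by
  unfold CC
  rw [← integral_add (CC_integrable hk hks hg hp) (CC_integrable hk hks hh hp)]
  simp only [mul_add]

lemma CC_sum {τ : ℝ} {k : E3 → ℝ} (hk : Continuous k) (hks : HasCompactSupport k)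
    {g : Fin 3 → ℝ × E3 → ℝ} (hg : ∀ i, ContinuousOn (g i) (St τ)) {p : ℝ × E3}
    (hp : p ∈ St τ) : CC k (fun q => ∑ i, g i q) p = ∑ i, CC k (g i) p := by
  unfold CC
  rw [← integral_finsetSum _ fun i _ => (CC_integrable hk hks (hg i) hp)]
  simp only [Finset.mul_sum]

lemma core {τ : ℝ} {φ ρ : ℝ × E3 → ℝ} {a J : Fin 3 → ℝ × E3 → ℝ}
    (hφ : ContDiffOn ℝ 2 φ (St τ)) (ha : ∀ i, ContDiffOn ℝ 2 (a i) (St τ))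
    (hρ : ContDiffOn ℝ 1 ρ (St τ)) (hJ : ∀ i, ContDiffOn ℝ 1 (J i) (St τ))
    (wφ : ∀ p ∈ St τ, 0 < p.1 → DD (St τ) (1, 0) (DD (St τ) (1, 0) φ) p
      = (∑ i, DD (St τ) (0, e3 i) (DD (St τ) (0, e3 i) φ) p) + ρ p)
    (wa : ∀ i, ∀ p ∈ St τ, 0 < p.1 → DD (St τ) (1, 0) (DD (St τ) (1, 0) (a i)) p
      = (∑ j, DD (St τ) (0, e3 j) (DD (St τ) (0, e3 j) (a i)) p) + J i p)
    (cons : ∀ p ∈ St τ, 0 < p.1 → DD (St τ) (1, 0) ρ p + ∑ i, DD (St τ) (0, e3 i) (J i) p = 0)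
    (φ0 : ∀ x, φ (0, x) = 0) (φ1 : ∀ x, DD (St τ) (1, 0) φ (0, x) = 0)
    (a0 : ∀ x, ∑ i, DD (St τ) (0, e3 i) (a i) (0, x) = 0)
    (a1 : ∀ x, ρ (0, x) + ∑ i, DD (St τ) (0, e3 i) (DD (St τ) (1, 0) (a i)) (0, x) = 0) :
    ∀ p ∈ St τ, DD (St τ) (1, 0) φ p + ∑ i, DD (St τ) (0, e3 i) (a i) p = 0 := by
  rintro ⟨t, x⟩ hp
  have ht : t ∈ Ico 0 τ := hp.1
  have hτ : 0 < τ := ht.1.trans_lt ht.2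
  have hu := St_uniq τ
  have mem0 : ∀ y, ((0 : ℝ), y) ∈ St τ := fun y => ⟨⟨le_rfl, hτ⟩, mem_univ _⟩
  set T : ℝ × E3 := (1, 0) with hT
  have hφ' : ContDiffOn ℝ 1 φ (St τ) := hφ.of_le (by norm_num)
  have ha' : ∀ i, ContDiffOn ℝ 1 (a i) (St τ) := fun i => (ha i).of_le (by norm_num)
  have hDφ : ∀ v, ContDiffOn ℝ 1 (DD (St τ) v φ) (St τ) := fun v => DD_C1 hu hφ v
  have hDa : ∀ i v, ContDiffOn ℝ 1 (DD (St τ) v (a i)) (St τ) := fun i v => DD_C1 hu (ha i) v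
  have main : ∀ k : E3 → ℝ, ContDiff ℝ (⊤ : ℕ∞) k → HasCompactSupport k →
      CC k (fun q => DD (St τ) T φ q + ∑ i, DD (St τ) (0, e3 i) (a i) q) (t, x) = 0 := by
    intro k hk hks
    have one : ∀ {k : E3 → ℝ}, ContDiff ℝ (⊤ : ℕ∞) k → ContDiff ℝ 1 k :=
      fun h => h.of_le (by exact_mod_cast le_top)
    have hk1 := fun i => pd3_smooth hk i
    have hk2 := fun i j => pd3_smooth (hk1 i) j
    have hs1 := fun i => pd3_supp hks i
    have hs2 := fun i j => pd3_supp (hs1 i) j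
    let V : ℝ × E3 → ℝ := fun p => (∑ j, CC (pd3 (pd3 k j) j) φ p) + CC k ρ p
      + ∑ i, CC (pd3 k i) (DD (St τ) T (a i)) p
    let W : Fin 3 → ℝ × E3 → ℝ := fun j p => CC (pd3 k j) (DD (St τ) T φ) p
      + ∑ i, CC (pd3 (pd3 k i) j) (a i) p
    let w : ℝ × E3 → ℝ := fun p => CC k (DD (St τ) T φ) p + ∑ i, CC (pd3 k i) (a i) p
    have A1 := fun j => CC_C1 (one (hk2 j j)) (hs2 j j) hφ'
    have A2 := CC_C1 (one hk) hks hρ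
    have A3 := fun i => CC_C1 (one (hk1 i)) (hs1 i) (hDa i T)
    have B1 := fun j => CC_C1 (one (hk1 j)) (hs1 j) (hDφ T)
    have B2 := fun i j => CC_C1 (one (hk2 i j)) (hs2 i j) (ha' i)
    have D1 := CC_C1 (one hk) hks (hDφ T)
    have D2 := fun i => CC_C1 (one (hk1 i)) (hs1 i) (ha' i)
    have hA1 := ContDiffOn.sum (s := Finset.univ) fun j _ => (A1 j).1
    have hA3 := ContDiffOn.sum (s := Finset.univ) fun j _ => (A3 j).1
    have hV : ContDiffOn ℝ 1 V (St τ) := (hA1.add A2.1).add hA3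
    have hW : ∀ j, ContDiffOn ℝ 1 (W j) (St τ) := fun j =>
      (B1 j).1.add (ContDiffOn.sum (s := Finset.univ) fun i _ => (B2 i j).1)
    have hw : ContDiffOn ℝ 1 w (St τ) :=
      D1.1.add (ContDiffOn.sum (s := Finset.univ) fun i _ => (D2 i).1)
    have DV : ∀ v, ∀ p ∈ St τ, DD (St τ) v V p = (∑ j, CC (pd3 (pd3 k j) j) (DD (St τ) v φ) p)
        + CC k (DD (St τ) v ρ) p + ∑ i, CC (pd3 k i) (DD (St τ) v (DD (St τ) T (a i))) p := by
      intro v p hp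
      simp only [V]
      rw [DD_add hu (hA1.add A2.1) hA3 v hp, DD_add hu hA1 A2.1 v hp, DD_sum hu (fun j => (A1 j).1) v hp,
        DD_sum hu (fun j => (A3 j).1) v hp, A2.2 v p hp]
      simp only [(A1 _).2 v p hp, (A3 _).2 v p hp]
    have DW : ∀ j v, ∀ p ∈ St τ, DD (St τ) v (W j) p = CC (pd3 k j) (DD (St τ) v (DD (St τ) T φ)) p
        + ∑ i, CC (pd3 (pd3 k i) j) (DD (St τ) v (a i)) p := by
      intro j v p hp
      simp only [W]
      rw [DD_add hu (B1 j).1 (ContDiffOn.sum (s := Finset.univ) fun i _ => (B2 i j).1) v hp,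
        DD_sum hu (fun i => (B2 i j).1) v hp, (B1 j).2 v p hp]
      simp only [(B2 _ _).2 v p hp]
    have Dw : ∀ v, ∀ p ∈ St τ, DD (St τ) v w p = CC k (DD (St τ) v (DD (St τ) T φ)) p
        + ∑ i, CC (pd3 k i) (DD (St τ) v (a i)) p := by
      intro v p hp
      simp only [w]
      rw [DD_add hu D1.1 (ContDiffOn.sum (s := Finset.univ) fun i _ => (D2 i).1) v hp,
        DD_sum hu (fun i => (D2 i).1) v hp, D1.2 v p hp]
      simp only [(D2 _).2 v p hp]
    -- convolution of the wave equations
    have lapC : ∀ {κ : E3 → ℝ}, ContDiff ℝ (⊤ : ℕ∞) κ → HasCompactSupport κ →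
        ∀ {g h : ℝ × E3 → ℝ}, ContDiffOn ℝ 2 g (St τ) → ContDiffOn ℝ 1 h (St τ) →
        (∀ p ∈ St τ, 0 < p.1 → DD (St τ) T (DD (St τ) T g) p
          = (∑ i, DD (St τ) (0, e3 i) (DD (St τ) (0, e3 i) g) p) + h p) →
        ∀ p ∈ St τ, 0 < p.1 → CC κ (DD (St τ) T (DD (St τ) T g)) p
          = (∑ i, CC (pd3 (pd3 κ i) i) g p) + CC κ h p := by
      intro κ hκ hκs g h hg hh hwave p hp hp0
      have hc : ∀ i, ContinuousOn (DD (St τ) (0, e3 i) (DD (St τ) (0, e3 i) g)) (St τ) :=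
        fun i => DD_C0 hu (DD_C1 hu hg _) _
      rw [CC_congr (h := fun q => (∑ i, DD (St τ) (0, e3 i) (DD (St τ) (0, e3 i) g) q) + h q)
        (fun y => hwave (p.1, y) ⟨hp.1, mem_univ _⟩ hp0),
        CC_add hκ.continuous hκs (continuousOn_finsetSum _ fun i _ => hc i) hh.continuousOn hp,
        CC_sum hκ.continuous hκs hc hp]
      congr 1
      refine Finset.sum_congr rfl fun i _ => ?_
      rw [CC_parts (one hκ) hκs (DD_C1 hu hg _) i hp,
        CC_parts (one (pd3_smooth hκ i)) (pd3_supp hκs i) (hg.of_le (by norm_num)) i hp]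
    have hDρ : ContinuousOn (DD (St τ) T ρ) (St τ) := DD_C0 hu hρ T
    have hDJ : ∀ i, ContinuousOn (DD (St τ) (0, e3 i) (J i)) (St τ) := fun i => DD_C0 hu (hJ i) _
    have consC : ∀ p ∈ St τ, 0 < p.1 → CC k (DD (St τ) T ρ) p + ∑ i, CC (pd3 k i) (J i) p = 0 := by
      intro p hp hp0
      have : ∀ i, CC (pd3 k i) (J i) p = CC k (DD (St τ) (0, e3 i) (J i)) p := fun i =>
        (CC_parts (one hk) hks (hJ i) i hp).symm
      simp only [this]
      rw [← CC_sum hk.continuous hks hDJ hp,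
        ← CC_add hk.continuous hks hDρ (continuousOn_finsetSum _ fun i _ => hDJ i) hp]
      exact CC_zero fun y => cons (p.1, y) ⟨hp.1, mem_univ _⟩ hp0
    have eq1 : ∀ p ∈ St τ, 0 < p.1 → DD (St τ) T V p = ∑ i, DD (St τ) (0, e3 i) (W i) p := by
      intro p hp hp0
      have e1 : ∀ i, CC (pd3 k i) (DD (St τ) T (DD (St τ) T (a i))) p
          = (∑ j, CC (pd3 (pd3 (pd3 k i) j) j) (a i) p) + CC (pd3 k i) (J i) p := fun i =>
        lapC (hk1 i) (hs1 i) (ha i) (hJ i) (wa i) p hp hp0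
      have e2 : ∀ j, DD (St τ) (0, e3 j) (W j) p = CC (pd3 (pd3 k j) j) (DD (St τ) T φ) p
          + ∑ i, CC (pd3 (pd3 (pd3 k i) j) j) (a i) p := by
        intro j
        rw [DW j _ p hp, CC_parts (one (hk1 j)) (hs1 j) (hDφ T) j hp]
        congr 1
        exact Finset.sum_congr rfl fun i _ => CC_parts (one (hk2 i j)) (hs2 i j) (ha' i) j hp
      rw [DV T p hp]
      simp only [e1, e2, Finset.sum_add_distrib]
      rw [Finset.sum_comm (f := fun i j => CC (pd3 (pd3 (pd3 k i) j) j) (a i) p)]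
      linarith [consC p hp hp0]
    have eq2 : ∀ j, ∀ p ∈ St τ, 0 < p.1 → DD (St τ) T (W j) p = DD (St τ) (0, e3 j) V p := by
      intro j p hp hp0
      rw [DV _ p hp, DW j T p hp, lapC (hk1 j) (hs1 j) hφ hρ wφ p hp hp0,
        CC_parts (one hk) hks hρ j hp]
      congr 1
      · congr 1
        refine Finset.sum_congr rfl fun i _ => ?_
        rw [CC_parts (one (hk2 i i)) (hs2 i i) hφ' j hp, pd3_comm (hk1 i) i j, pd3_comm hk i j]
      · exact Finset.sum_congr rfl fun i _ => (CC_parts (one (hk1 i)) (hs1 i) (hDa i T) j hp).symm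
    have hDac : ∀ i v, ContinuousOn (DD (St τ) v (a i)) (St τ) := fun i v => (hDa i v).continuousOn
    have hDDa : ∀ i, ContinuousOn (DD (St τ) (0, e3 i) (DD (St τ) T (a i))) (St τ) :=
      fun i => DD_C0 hu (hDa i T) _
    have V0 : ∀ y, V (0, y) = 0 := by
      intro y
      have h1 : ∀ j, CC (pd3 (pd3 k j) j) φ (0, y) = 0 := fun j => CC_zero φ0
      have h2 : ∀ i, CC (pd3 k i) (DD (St τ) T (a i)) (0, y)
          = CC k (DD (St τ) (0, e3 i) (DD (St τ) T (a i))) (0, y) := fun i =>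
        (CC_parts (one hk) hks (hDa i T) i (mem0 y)).symm
      simp only [V, h1, h2, Finset.sum_const_zero, zero_add]
      rw [← CC_sum hk.continuous hks hDDa (mem0 y), ← CC_add hk.continuous hks hρ.continuousOn
        (continuousOn_finsetSum _ fun i _ => hDDa i) (mem0 y)]
      exact CC_zero a1
    have divC0 : ∀ {κ : E3 → ℝ}, ContDiff ℝ (⊤ : ℕ∞) κ → HasCompactSupport κ →
        ∀ y, ∑ i, CC (pd3 κ i) (a i) (0, y) = 0 := by
      intro κ hκ hκs y
      have h2 : ∀ i, CC (pd3 κ i) (a i) (0, y)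
          = CC κ (DD (St τ) (0, e3 i) (a i)) (0, y) := fun i =>
        (CC_parts (one hκ) hκs (ha' i) i (mem0 y)).symm
      simp only [h2]
      rw [← CC_sum hκ.continuous hκs (fun i => hDac i _) (mem0 y)]
      exact CC_zero a0
    have W0 : ∀ j y, W j (0, y) = 0 := by
      intro j y
      have h1 : CC (pd3 k j) (DD (St τ) T φ) (0, y) = 0 := CC_zero φ1
      simp only [W, h1, zero_add, pd3_comm hk _ j]
      exact divC0 (hk1 j) (hs1 j) y
    have w0 : ∀ y, w (0, y) = 0 := by
      intro y
      have h1 : CC k (DD (St τ) T φ) (0, y) = 0 := CC_zero φ1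
      simp only [w, h1, zero_add]
      exact divC0 hk hks y
    have hVz := energy hV hW eq1 eq2 V0 W0
    have hwt : ∀ p ∈ St τ, 0 < p.1 → DD (St τ) T w p = 0 := by
      intro p hp hp0
      rw [Dw T p hp, lapC hk hks hφ hρ wφ p hp hp0]
      exact hVz p hp
    have hwz : w (t, x) = 0 := by
      rcases ht.1.eq_or_lt with h | h
      · rw [← h]; exact w0 x
      · have hd : ∀ s ∈ Ioo 0 t, HasDerivAt (fun s => w (s, x)) 0 s := by
          intro s hs
          have hs' : s ∈ Ioo 0 τ := ⟨hs.1, hs.2.trans ht.2⟩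
          have hm : (s, x) ∈ St τ := ⟨⟨hs.1.le, hs'.2⟩, mem_univ _⟩
          have := DD_time' hs' (hw.differentiableOn (by norm_num) _ hm)
          rwa [← hT, hwt _ hm hs.1] at this
        have hc : ContinuousOn (fun s => w (s, x)) (Icc 0 t) :=
          hw.continuousOn.comp (by fun_prop) fun s hs => ⟨⟨hs.1, hs.2.trans_lt ht.2⟩, mem_univ _⟩
        obtain ⟨c, hc1, hc2⟩ := exists_deriv_eq_slope (fun s => w (s, x)) h hc
          (fun s hs => (hd s hs).differentiableAt.differentiableWithinAt)
        rw [(hd c hc1).deriv, w0, sub_zero, sub_zero, eq_comm, div_eq_zero_iff] at hc2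
        exact hc2.resolve_right h.ne'
    rw [CC_add hk.continuous hks (hDφ T).continuousOn
      (continuousOn_finsetSum _ fun i _ => hDac i _) hp, CC_sum hk.continuous hks (fun i => hDac i _) hp]
    refine Eq.trans ?_ hwz
    simp only [w]
    congr 1
    exact Finset.sum_congr rfl fun i _ => CC_parts (one hk) hks (ha' i) i hp
  have hG : ContinuousOn (fun q => DD (St τ) T φ q + ∑ i, DD (St τ) (0, e3 i) (a i) q) (St τ) :=
    (hDφ T).continuousOn.add (continuousOn_finsetSum _ fun i _ => (hDa i _).continuousOn)
  have hGc := CC_slice_cont hG hp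
  have hae := ae_eq_zero_of_integral_contDiff_smul_eq_zero (μ := (volume : Measure E3))
    hGc.locallyIntegrable (fun k hk hks => by simpa [CC] using main k hk hks)
  have hz := (Continuous.ae_eq_iff_eq volume hGc continuous_const).1 hae
  simpa using congrFun hz 0

section bridge

variable {E F : Type} [NormedAddCommGroup E] [NormedSpace ℝ E] [NormedAddCommGroup F]
  [NormedSpace ℝ F] [CompleteSpace E] [CompleteSpace F]

lemma DD_clm {P : Type} [NormedAddCommGroup P] [NormedSpace ℝ P] {S : Set P}
    (hSu : UniqueDiffOn ℝ S) {g : P → E} (hg : ContDiffOn ℝ 1 g S)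
    (L : E →L[ℝ] F) (v : P) {p : P} (hp : p ∈ S) :
    DD S v (fun q => L (g q)) p = L (DD S v g p) := by
  have h := L.hasFDerivAt.comp_hasFDerivWithinAt p
    (hg.differentiableOn (by norm_num) p hp).hasFDerivWithinAt
  unfold DD
  have h2 := h.fderivWithin (hSu p hp)
  simp only [Function.comp_def] at h2
  rw [h2]; rfl

lemma DD2_clm {P : Type} [NormedAddCommGroup P] [NormedSpace ℝ P] {S : Set P}
    (hSu : UniqueDiffOn ℝ S) {g : P → E} (hg : ContDiffOn ℝ 2 g S)
    (L : E →L[ℝ] F) (v : P) {p : P} (hp : p ∈ S) :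
    DD S v (DD S v (fun q => L (g q))) p = L (DD S v (DD S v g) p) := by
  rw [DD_congr (fun q hq => DD_clm hSu (hg.of_le (by norm_num)) L v hq) v hp,
    DD_clm hSu (DD_C1 hSu hg v) L v hp]

lemma tt_eq {τ : ℝ} {g : ℝ × E3 → E} (hg : ContDiffOn ℝ 2 g (St τ)) {t : ℝ} (ht : t ∈ Ioo 0 τ)
    (x : E3) : deriv (fun s => deriv (fun s' => g (s', x)) s) t
      = DD (St τ) (1, 0) (DD (St τ) (1, 0) g) (t, x) := by
  have mem : ∀ s ∈ Ioo 0 τ, (s, x) ∈ St τ := fun s hs => ⟨⟨hs.1.le, hs.2⟩, mem_univ _⟩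
  have h : (fun s => deriv (fun s' => g (s', x)) s) =ᶠ[𝓝 t] fun s => DD (St τ) (1, 0) g (s, x) := by
    filter_upwards [isOpen_Ioo.mem_nhds ht] with s hs
    exact (DD_time' hs (hg.differentiableOn (by norm_num) _ (mem s hs))).deriv
  rw [h.deriv_eq]
  exact (DD_time' ht ((DD_C1 (St_uniq τ) hg _).differentiableOn (by norm_num) _ (mem t ht))).deriv

lemma xx_eq {τ : ℝ} {g : ℝ × E3 → E} (hg : ContDiffOn ℝ 2 g (St τ)) {t : ℝ} (ht : t ∈ Ico 0 τ)
    (x e : E3) : fderiv ℝ (fun y => fderiv ℝ (fun y' => g (t, y')) y e) x e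
      = DD (St τ) (0, e) (DD (St τ) (0, e) g) (t, x) := by
  have mem : ∀ y, (t, y) ∈ St τ := fun y => ⟨ht, mem_univ _⟩
  have h : (fun y => fderiv ℝ (fun y' => g (t, y')) y e) = fun y => DD (St τ) (0, e) g (t, y) := by
    funext y
    exact DD_space_eq ht (hg.differentiableOn (by norm_num) _ (mem y)) e
  rw [h]
  exact DD_space_eq ht ((DD_C1 (St_uniq τ) hg _).differentiableOn (by norm_num) _ (mem x)) e

end bridge

lemma slice_Cn {n : WithTop ℕ∞} {S : Set (ℝ × E3)} {U : (ℝ × E3) × E3 → ℝ}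
    (hU : ContDiffOn ℝ n U (S ×ˢ univ)) (z : E3) : ContDiffOn ℝ n (fun q => U (q, z)) S :=
  hU.comp (ContDiff.contDiffOn (by fun_prop)) fun _ hq => ⟨hq, mem_univ _⟩

lemma PI_DD2 {S : Set (ℝ × E3)} (hS : Convex ℝ S) (hSu : UniqueDiffOn ℝ S)
    {K : Set E3} (hK : IsCompact K) {U : (ℝ × E3) × E3 → ℝ} (hU : ContDiffOn ℝ 2 U (S ×ˢ univ))
    (h0 : ∀ p ∈ S, ∀ z, z ∉ K → U (p, z) = 0) (v : ℝ × E3) {p : ℝ × E3} (hp : p ∈ S) :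
    Integrable (fun z => DD S v (DD S v (fun q => U (q, z))) p) ∧
    DD S v (DD S v (II U)) p = ∫ z, DD S v (DD S v (fun q => U (q, z))) p := by
  have hTu : UniqueDiffOn ℝ (S ×ˢ (univ : Set E3)) := hSu.prod uniqueDiffOn_univ
  have hU1 : ContDiffOn ℝ 1 U (S ×ˢ univ) := hU.of_le (by norm_num)
  have hD := DD_C1 hTu hU (v, (0 : E3))
  have a := PI1 hS hSu hK hU1 h0
  have b := PI1 hS hSu hK hD (a.2.2.2.2 v)
  have e : ∀ z, DD (S ×ˢ univ) (v, (0 : E3)) (DD (S ×ˢ univ) (v, (0 : E3)) U) (p, z)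
      = DD S v (DD S v (fun q => U (q, z))) p := by
    intro z
    rw [DD_slice_eq hSu hp z (hD.differentiableOn (by norm_num) _ ⟨hp, mem_univ _⟩) v]
    exact DD_congr (fun q hq =>
      DD_slice_eq hSu hq z (hU1.differentiableOn (by norm_num) _ ⟨hq, mem_univ _⟩) v) v hp
  constructor
  · simp only [← e]
    exact integrable_cpt hK (slice_cont (F := fun p z =>
      DD (S ×ˢ univ) (v, (0 : E3)) (DD (S ×ˢ univ) (v, (0 : E3)) U) (p, z)) (DD_C0 hTu hD _) hp)
      (b.2.2.2.2 v p hp)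
  · rw [DD_congr (fun q hq => a.2.2.2.1 v q hq) v hp, b.2.2.2.1 v p hp]
    simp only [II, e]

lemma wave_int {τ : ℝ} {K : Set E3} (hK : IsCompact K) {U Ff : (ℝ × E3) × E3 → ℝ} {w : E3 → ℝ}
    (hw : ContDiff ℝ 2 w)
    (hU : ContDiffOn ℝ 2 U (St τ ×ˢ univ)) (hF : ContDiffOn ℝ 1 Ff (St τ ×ˢ univ))
    (hU0 : ∀ p ∈ St τ, ∀ z, z ∉ K → U (p, z) = 0)
    (hF0 : ∀ p ∈ St τ, ∀ z, z ∉ K → Ff (p, z) = 0)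
    (wave : ∀ z, ∀ p ∈ St τ, 0 < p.1 →
      DD (St τ) (1, 0) (DD (St τ) (1, 0) (fun q => U (q, z))) p
      = (∑ i, DD (St τ) (0, e3 i) (DD (St τ) (0, e3 i) (fun q => U (q, z))) p) + Ff (p, z)) :
    ContDiffOn ℝ 2 (II fun q => w q.2 * U q) (St τ) ∧
    ContDiffOn ℝ 1 (II fun q => w q.2 * Ff q) (St τ) ∧
    ∀ p ∈ St τ, 0 < p.1 →
      DD (St τ) (1, 0) (DD (St τ) (1, 0) (II fun q => w q.2 * U q)) p
      = (∑ i, DD (St τ) (0, e3 i) (DD (St τ) (0, e3 i) (II fun q => w q.2 * U q)) p)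
        + II (fun q => w q.2 * Ff q) p := by
  have hS := St_convex τ
  have hSu := St_uniq τ
  have hwU : ContDiffOn ℝ 2 (fun q : (ℝ × E3) × E3 => w q.2 * U q) (St τ ×ˢ univ) :=
    (hw.comp contDiff_snd).contDiffOn.mul hU
  have hwF : ContDiffOn ℝ 1 (fun q : (ℝ × E3) × E3 => w q.2 * Ff q) (St τ ×ˢ univ) :=
    ((hw.of_le (by norm_num)).comp contDiff_snd).contDiffOn.mul hF
  have hwU0 : ∀ p ∈ St τ, ∀ z, z ∉ K → w z * U (p, z) = 0 := fun p hp z hz => by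
    rw [hU0 p hp z hz, mul_zero]
  have hwF0 : ∀ p ∈ St τ, ∀ z, z ∉ K → w z * Ff (p, z) = 0 := fun p hp z hz => by
    rw [hF0 p hp z hz, mul_zero]
  refine ⟨PI2 hS hSu hK hwU hwU0, (PI1 hS hSu hK hwF hwF0).2.1, fun p hp hp0 => ?_⟩
  have hI := fun v => PI_DD2 hS hSu hK hwU hwU0 v hp
  have hFi : Integrable (fun z => w z * Ff (p, z)) :=
    integrable_cpt hK (slice_cont (F := fun p z => w z * Ff (p, z)) hwF.continuousOn hp) (hwF0 p hp)
  rw [(hI _).2]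
  simp only [(hI _).2]
  rw [← integral_finsetSum _ fun i _ => (hI (0, e3 i)).1]
  unfold II
  rw [← integral_add (integrable_finsetSum _ fun i _ => (hI (0, e3 i)).1) hFi]
  congr 1
  funext z
  have hs := slice_Cn hU z
  have sc : ∀ v, DD (St τ) v (DD (St τ) v (fun q => w z * U (q, z))) p
      = w z * DD (St τ) v (DD (St τ) v (fun q => U (q, z))) p := fun v =>
    DD2_clm hSu hs (w z • ContinuousLinearMap.id ℝ ℝ) v hp
  simp only [sc]
  rw [wave z p hp hp0, mul_add, Finset.mul_sum]

lemma vrel_smooth (i : Fin 3) : ContDiff ℝ 2 (fun ξ => vrel ξ i) := by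
  have h1 : ContDiff ℝ 2 (fun ξ : E3 => (Real.sqrt (1 + ‖ξ‖ ^ 2))⁻¹) := by
    refine ContDiff.inv (ContDiff.sqrt (contDiff_const.add (contDiff_norm_sq ℝ)) ?_) ?_
    · intro x; positivity
    · intro x; positivity
  have h2 : ContDiff ℝ 2 (fun ξ : E3 => ξ i) := by fun_prop
  simpa [vrel] using h1.mul h2


lemma vrel_cont : Continuous vrel := by
  have h : Continuous (fun ξ : E3 => (Real.sqrt (1 + ‖ξ‖ ^ 2))⁻¹) := by
    refine Continuous.inv₀ (by fun_prop) ?_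
    intro x; positivity
  exact h.smul continuous_id

lemma int_comp {K : Set E3} (hK : IsCompact K) {G : E3 → ℝ} (hG : Continuous G)
    (h0 : ∀ z, z ∉ K → G z = 0) (i : Fin 3) :
    (∫ z, G z • vrel z) i = ∫ z, vrel z i * G z := by
  have hI : Integrable (fun z => G z • vrel z) :=
    integrable_cpt hK (hG.smul vrel_cont) fun z hz => by rw [h0 z hz, zero_smul]
  have h := (EuclideanSpace.proj (𝕜 := ℝ) i : E3 →L[ℝ] ℝ).integral_comp_comm hI
  simp only [PiLp.proj_apply, PiLp.smul_apply, smul_eq_mul] at h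
  rw [← h]
  simp only [mul_comm]

lemma timeD_eq {E : Type} [NormedAddCommGroup E] [NormedSpace ℝ E]
    {τ : ℝ} {g : ℝ × E3 → E} (hg : ContDiffOn ℝ 1 g (St τ)) {t : ℝ} (ht : t ∈ Ico 0 τ) (x : E3) :
    timeD (fun s => g (s, x)) t = DD (St τ) (1, 0) g (t, x) :=
  (DD_time ht (hg.differentiableOn (by norm_num) _ ⟨ht, mem_univ _⟩)).derivWithin
    (uniqueDiffOn_Ici 0 t ht.1)

/-- **Lorentz gauge condition for the Lienard--Wiechert potentials**: with
`φ = ∫ u dξ` and `A = A⁰ + ∫ v(ξ) u dξ`, one has `∂ₜφ + divₓA = 0` on `[0,τ)×ℝ³`. -/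
theorem lorentz_gauge_condition
    (τ r : ℝ) (hτ : 0 < τ) (hr : 0 < r)
    (f u : ℝ → E3 → E3 → ℝ) (Ein AI : E3 → E3) (A0 : ℝ → E3 → E3)
    -- `f` is `C¹` on `[0,τ)×ℝ³×ℝ³`, vanishes for `|ξ| > r`, and satisfies the local
    -- conservation law `∂ₜρ_f + divₓ j_f = 0`
    (hfreg : ContDiffOn ℝ 1 (fun p : ℝ × E3 × E3 => f p.1 p.2.1 p.2.2)
      (Set.Ico 0 τ ×ˢ (Set.univ : Set (E3 × E3))))
    (hfsupp : ∀ t ∈ Set.Ico 0 τ, ∀ x ξ : E3, r < ‖ξ‖ → f t x ξ = 0)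
    (hcons : ∀ t ∈ Set.Ioo 0 τ, ∀ x : E3,
      deriv (fun s => ∫ ξ : E3, f s x ξ) t
        + divg (fun y => ∫ ξ : E3, f t y ξ • vrel ξ) x = 0)
    -- `u` is `C²` on `[0,τ)×ℝ³×ℝ³`, vanishes for `|ξ| > r`, and solves, for each fixed
    -- `ξ`, the wave equation `∂ₜ²u - Δₓu = f` with vanishing initial data
    (hureg : ContDiffOn ℝ 2 (fun p : ℝ × E3 × E3 => u p.1 p.2.1 p.2.2)
      (Set.Ico 0 τ ×ˢ (Set.univ : Set (E3 × E3))))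
    (husupp : ∀ t ∈ Set.Ico 0 τ, ∀ x ξ : E3, r < ‖ξ‖ → u t x ξ = 0)
    (huwave : ∀ ξ : E3, ∀ t ∈ Set.Ioo 0 τ, ∀ x : E3,
      deriv (fun s => deriv (fun s' => u s' x ξ) s) t - lapx (fun y => u t y ξ) x = f t x ξ)
    (hu0 : ∀ x ξ : E3, u 0 x ξ = 0)
    (hu0t : ∀ x ξ : E3, timeD (fun s => u s x ξ) 0 = 0)
    -- the initial electric field is `C²` and compatible with `ρ_f(0)`
    (hEinreg : ContDiff ℝ 2 Ein)
    (hdivEin : ∀ x : E3, divg Ein x = ∫ ξ : E3, f 0 x ξ)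
    -- `A_I` is `C²` and divergence free
    (hAIreg : ContDiff ℝ 2 AI)
    (hdivAI : ∀ x : E3, divg AI x = 0)
    -- `A⁰` is `C²` and solves the homogeneous wave equation with data `(A_I, -E^in)`
    (hA0reg : ContDiffOn ℝ 2 (fun p : ℝ × E3 => A0 p.1 p.2)
      (Set.Ico 0 τ ×ˢ (Set.univ : Set E3)))
    (hA0wave : ∀ t ∈ Set.Ioo 0 τ, ∀ x : E3,
      deriv (fun s => deriv (fun s' => A0 s' x) s) t - lapxV (A0 t) x = 0)
    (hA00 : ∀ x : E3, A0 0 x = AI x)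
    (hA00t : ∀ x : E3, timeD (fun s => A0 s x) 0 = -Ein x)
 :
    ∀ t ∈ Set.Ico 0 τ, ∀ x : E3,
      timeD (fun s => phiP u s x) t + divg (AP A0 u t) x = 0 := by
  have hu := St_uniq τ
  have hS := St_convex τ
  have hK : IsCompact (closedBall (0 : E3) r) := isCompact_closedBall 0 r
  have h0τ : (0 : ℝ) ∈ Ico 0 τ := ⟨le_rfl, hτ⟩
  have hout : ∀ z : E3, z ∉ closedBall (0 : E3) r → r < ‖z‖ := fun z hz => by
    simpa using hz
  let U : (ℝ × E3) × E3 → ℝ := fun q => u q.1.1 q.1.2 q.2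
  let Ff : (ℝ × E3) × E3 → ℝ := fun q => f q.1.1 q.1.2 q.2
  have hU : ContDiffOn ℝ 2 U (St τ ×ˢ univ) :=
    hureg.comp (t := Set.Ico 0 τ ×ˢ (Set.univ : Set (E3 × E3)))
      (f := fun q : (ℝ × E3) × E3 => (q.1.1, q.1.2, q.2))
      (ContDiff.contDiffOn (by fun_prop)) fun q hq => ⟨hq.1.1, mem_univ _⟩
  have hF : ContDiffOn ℝ 1 Ff (St τ ×ˢ univ) :=
    hfreg.comp (t := Set.Ico 0 τ ×ˢ (Set.univ : Set (E3 × E3)))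
      (f := fun q : (ℝ × E3) × E3 => (q.1.1, q.1.2, q.2))
      (ContDiff.contDiffOn (by fun_prop)) fun q hq => ⟨hq.1.1, mem_univ _⟩
  have hU0 : ∀ p ∈ St τ, ∀ z, z ∉ closedBall (0 : E3) r → U (p, z) = 0 := fun p hp z hz =>
    husupp p.1 hp.1 p.2 z (hout z hz)
  have hF0 : ∀ p ∈ St τ, ∀ z, z ∉ closedBall (0 : E3) r → Ff (p, z) = 0 := fun p hp z hz =>
    hfsupp p.1 hp.1 p.2 z (hout z hz)
  have wave : ∀ z, ∀ p ∈ St τ, 0 < p.1 →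
      DD (St τ) (1, 0) (DD (St τ) (1, 0) (fun q => U (q, z))) p
      = (∑ i, DD (St τ) (0, e3 i) (DD (St τ) (0, e3 i) (fun q => U (q, z))) p) + Ff (p, z) := by
    rintro z ⟨t, x⟩ hp hp0
    have hs := slice_Cn hU z
    rw [← tt_eq hs ⟨hp0, hp.1.2⟩ x]
    simp only [← xx_eq hs hp.1 x]
    have := huwave z t ⟨hp0, hp.1.2⟩ x
    unfold lapx at this
    simp only [U, Ff]
    linarith
  have WI := fun {w : E3 → ℝ} (hw : ContDiff ℝ 2 w) => wave_int hK hw hU hF hU0 hF0 wave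
  have hone : ContDiff ℝ 2 (fun _ : E3 => (1 : ℝ)) := contDiff_const
  obtain ⟨hφ, hρ, wφ⟩ := WI hone
  have hv := fun i => WI (vrel_smooth i)
  have hA : ContDiffOn ℝ 2 (fun p : ℝ × E3 => A0 p.1 p.2) (St τ) := hA0reg
  have hA' : ContDiffOn ℝ 1 (fun p : ℝ × E3 => A0 p.1 p.2) (St τ) := hA.of_le (by norm_num)
  let L : Fin 3 → E3 →L[ℝ] ℝ := fun i => EuclideanSpace.proj i
  have hAi : ∀ i, ContDiffOn ℝ 2 (fun p : ℝ × E3 => L i (A0 p.1 p.2)) (St τ) := fun i =>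
    (L i).contDiff.comp_contDiffOn hA
  have hAi' : ∀ i, ContDiffOn ℝ 1 (fun p : ℝ × E3 => L i (A0 p.1 p.2)) (St τ) := fun i =>
    (hAi i).of_le (by norm_num)
  let b : Fin 3 → ℝ × E3 → ℝ := fun i => II fun q => vrel q.2 i * U q
  have hb : ∀ i, ContDiffOn ℝ 2 (b i) (St τ) := fun i => (hv i).1
  have hb' : ∀ i, ContDiffOn ℝ 1 (b i) (St τ) := fun i => (hb i).of_le (by norm_num)
  let a : Fin 3 → ℝ × E3 → ℝ := fun i p => L i (A0 p.1 p.2) + b i p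
  have ha : ∀ i, ContDiffOn ℝ 2 (a i) (St τ) := fun i => (hAi i).add (hb i)
  have Da : ∀ i v, ∀ p ∈ St τ, DD (St τ) v (a i) p
      = L i (DD (St τ) v (fun p : ℝ × E3 => A0 p.1 p.2) p) + DD (St τ) v (b i) p := by
    intro i v p hp
    rw [← DD_clm hu hA' (L i) v hp]
    exact DD_add hu (hAi' i) (hb' i) v hp
  have DDa : ∀ i v, ∀ p ∈ St τ, DD (St τ) v (DD (St τ) v (a i)) p
      = L i (DD (St τ) v (DD (St τ) v (fun p : ℝ × E3 => A0 p.1 p.2)) p)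
        + DD (St τ) v (DD (St τ) v (b i)) p := by
    intro i v p hp
    rw [← DD_clm hu (DD_C1 hu hA v) (L i) v hp, DD_congr (fun q hq => Da i v q hq) v hp]
    exact DD_add hu ((L i).contDiff.comp_contDiffOn (DD_C1 hu hA v)) (DD_C1 hu (hb i) v) v hp
  have waveA : ∀ p ∈ St τ, 0 < p.1 →
      DD (St τ) (1, 0) (DD (St τ) (1, 0) (fun p : ℝ × E3 => A0 p.1 p.2)) p
      = ∑ i, DD (St τ) (0, e3 i) (DD (St τ) (0, e3 i) (fun p : ℝ × E3 => A0 p.1 p.2)) p := by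
    rintro ⟨t, x⟩ hp hp0
    rw [← tt_eq hA ⟨hp0, hp.1.2⟩ x]
    simp only [← xx_eq hA hp.1 x]
    exact sub_eq_zero.1 (hA0wave t ⟨hp0, hp.1.2⟩ x)
  have wa : ∀ i, ∀ p ∈ St τ, 0 < p.1 → DD (St τ) (1, 0) (DD (St τ) (1, 0) (a i)) p
      = (∑ j, DD (St τ) (0, e3 j) (DD (St τ) (0, e3 j) (a i)) p)
        + II (fun q => vrel q.2 i * Ff q) p := by
    intro i p hp hp0
    have h1 := (hv i).2.2 p hp hp0
    rw [DDa i _ p hp, waveA p hp hp0, map_sum]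
    simp only [DDa i _ p hp, Finset.sum_add_distrib]
    simp only [b]
    rw [h1]
    ring
  have mem : ∀ {t : ℝ}, t ∈ Ico 0 τ → ∀ x : E3, (t, x) ∈ St τ := fun ht x => ⟨ht, mem_univ _⟩
  have compU : ∀ i, ∀ t ∈ Ico 0 τ, ∀ x, (∫ ξ : E3, u t x ξ • vrel ξ) i = b i (t, x) := by
    intro i t ht x
    exact int_comp hK (slice_cont (F := fun p z => U (p, z)) hU.continuousOn (mem ht x))
      (hU0 _ (mem ht x)) i
  have compF : ∀ i, ∀ t ∈ Ico 0 τ, ∀ x, (∫ ξ : E3, f t x ξ • vrel ξ) i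
      = II (fun q => vrel q.2 i * Ff q) (t, x) := by
    intro i t ht x
    exact int_comp hK (slice_cont (F := fun p z => Ff (p, z)) hF.continuousOn (mem ht x))
      (hF0 _ (mem ht x)) i
  have cons : ∀ p ∈ St τ, 0 < p.1 → DD (St τ) (1, 0) (II fun q => (fun _ : E3 => (1 : ℝ)) q.2 * Ff q) p
      + ∑ i, DD (St τ) (0, e3 i) (II fun q => vrel q.2 i * Ff q) p = 0 := by
    rintro ⟨t, x⟩ hp hp0
    have h := hcons t ⟨hp0, hp.1.2⟩ x
    have h1 := (DD_time' (x := x) ⟨hp0, hp.1.2⟩ (hρ.differentiableOn (by norm_num) _ hp)).deriv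
    rw [← h1]
    have h2 : ∀ i, DD (St τ) (0, e3 i) (II fun q => vrel q.2 i * Ff q) (t, x)
        = pd3 (fun y => (∫ ξ : E3, f t y ξ • vrel ξ) i) i x := by
      intro i
      rw [← DD_space_eq hp.1 ((hv i).2.1.differentiableOn (by norm_num) _ hp) (e3 i)]
      unfold pd3
      simp only [compF i t hp.1]
    simp only [h2]
    simpa [II, Ff, divg] using h
  have D0 : ∀ {w : E3 → ℝ}, ContDiff ℝ 2 w → ∀ y,
      DD (St τ) (1, 0) (II fun q => w q.2 * U q) (0, y) = 0 := by
    intro w hw y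
    have hwU : ContDiffOn ℝ 1 (fun q : (ℝ × E3) × E3 => w q.2 * U q) (St τ ×ˢ univ) :=
      ((hw.comp contDiff_snd).contDiffOn.mul hU).of_le (by norm_num)
    rw [(PI1 hS hu hK hwU (fun p hp z hz => by simp [hU0 p hp z hz])).2.2.2.1 _ _ (mem h0τ y)]
    unfold II
    refine integral_eq_zero_of_ae (Eventually.of_forall fun z => ?_)
    have h1 := DD_slice_eq hu (mem h0τ y) z
      (hwU.differentiableOn (by norm_num) _ ⟨mem h0τ y, mem_univ _⟩) (1, 0)
    have hs : ContDiffOn ℝ 1 (fun q => U (q, z)) (St τ) := (slice_Cn hU z).of_le (by norm_num)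
    have h2 : DD (St τ) (1, 0) (fun q => w z * U (q, z)) (0, y)
      = w z * DD (St τ) (1, 0) (fun q => U (q, z)) (0, y) :=
      DD_clm hu hs (w z • ContinuousLinearMap.id ℝ ℝ) (1, 0) (mem h0τ y)
    have h3 := timeD_eq hs h0τ y
    have h4 := hu0t y z
    simp only [U] at h3
    rw [h4] at h3
    refine (h1.trans h2).trans ?_
    show _ = (0 : ℝ)
    simp only [U]
    rw [← h3, mul_zero]
  have b0 : ∀ i x, b i (0, x) = 0 := by
    intro i x
    simp [b, II, U, hu0]
  have a0 : ∀ x, ∑ i, DD (St τ) (0, e3 i) (a i) (0, x) = 0 := by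
    intro x
    refine Eq.trans ?_ (hdivAI x)
    unfold divg pd3
    refine Finset.sum_congr rfl fun i _ => ?_
    rw [← DD_space_eq h0τ ((ha i).differentiableOn (by norm_num) _ (mem h0τ x)) (e3 i)]
    simp only [a, b0, hA00, add_zero, L]
    rfl
  have a1 : ∀ x, II (fun q => (fun _ : E3 => (1 : ℝ)) q.2 * Ff q) (0, x)
      + ∑ i, DD (St τ) (0, e3 i) (DD (St τ) (1, 0) (a i)) (0, x) = 0 := by
    intro x
    have h1 : II (fun q => (fun _ : E3 => (1 : ℝ)) q.2 * Ff q) (0, x) = divg Ein x := by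
      rw [hdivEin x]
      simp [II, Ff]
    rw [h1]
    unfold divg
    rw [← Finset.sum_add_distrib]
    refine Finset.sum_eq_zero fun i _ => ?_
    rw [← DD_space_eq h0τ ((DD_C1 hu (ha i) _).differentiableOn (by norm_num) _ (mem h0τ x)) (e3 i)]
    have h2 : ∀ y, DD (St τ) (1, 0) (a i) (0, y) = -(Ein y i) := by
      intro y
      rw [Da i _ _ (mem h0τ y), D0 (vrel_smooth i) y, ← timeD_eq hA' h0τ y, hA00t y]
      simp [L]
    simp only [h2]
    unfold pd3
    rw [fderiv_fun_neg]
    simp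
  have key := core hφ ha hρ (fun i => (hv i).2.1) wφ wa cons
    (fun x => by simp [II, U, hu0]) (D0 hone) a0 a1
  intro t ht x
  have hk := key (t, x) (mem ht x)
  rw [← timeD_eq (hφ.of_le (by norm_num)) ht x] at hk
  have h2 : divg (AP A0 u t) x = ∑ i, DD (St τ) (0, e3 i) (a i) (t, x) := by
    unfold divg pd3
    refine Finset.sum_congr rfl fun i _ => ?_
    rw [← DD_space_eq ht ((ha i).differentiableOn (by norm_num) _ (mem ht x)) (e3 i)]
    have h3 : (fun y => (AP A0 u t y) i) = fun y => a i (t, y) := by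
      funext y
      simp only [AP, PiLp.add_apply, compU i t ht y]
      rfl
    rw [h3]
  rw [h2]
  simpa [II, U, phiP] using hk
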